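/- arXiv:1811.03591 — 2 statements merged into one kernel-verified Lean document; each statement's English description precedes it below -/
import Mathlib

section
/- There exist a constant C > 0 and ε₀ ∈ (0,1) such that for every ε ∈ (0, ε₀) the following holds. Let p, q, p', q' ∈ ℝ with Δ := q − p > 0 and |(p' − q') − Δ| ≤ εΔ, and define the portals α = p − Δ/ε^{2/3}, β = p − Δ/ε^{1/3}, γ = q + Δ/ε^{1/3}, δ = q + Δ/ε^{2/3} and α' = q' − Δ/ε^{2/3}, β' = q' − Δ/ε^{1/3}, γ' = p' + Δ/ε^{1/3}, δ' = p' + Δ/ε^{2/3}. Then there exists a map g : ℝ → ℝ² such that g(α) = (α', 0), g(β) = (γ', 0), g(γ) = (β', 0), g(δ) = (δ', 0), and for all t₁, t₂ ∈ ℝ, (1 − C/log²(1/ε))·|t₁ − t₂| ≤ ‖g(t₁) − g(t₂)‖ ≤ (1 + C/log²(1/ε))·|t₁ − t₂|. -/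
/-- The point `(a, b) ∈ ℝ²` (Euclidean plane). -/
noncomputable def pt (a b : ℝ) : EuclideanSpace ℝ (Fin 2) :=
  (WithLp.equiv 2 (Fin 2 → ℝ)).symm ![a, b]

/-!
For unit vectors `u`, `v` one has `‖s • u - t • v‖ ^ 2 = (s - t) ^ 2 + s * t * ‖u - v‖ ^ 2`, while
`s * t * (log s - log t) ^ 2 ≤ (s - t) ^ 2`. Hence a spiral whose direction is a `k`-Lipschitz
function of the logarithm of the radius distorts distances by a factor within `1 ± k ^ 2`. The four
portals ask for a half turn between radii of order `Δ / ε ^ (1 / 3)` and `Δ / ε ^ (2 / 3)`, whose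
logarithms differ by about `log (1 / ε) / 3`, so `k` may be taken of order `1 / log (1 / ε)`. The
discrepancy between the two gap widths is absorbed beforehand by a piecewise linear stretch of the
line, whose distortion is at most `ε = O(1 / log (1 / ε) ^ 2)`.
-/

/-- A map is an `η`-almost isometry if it changes every distance by at most the fraction `η` of
it. -/
def IsAlmostIsometry {X Y : Type*} [PseudoMetricSpace X] [PseudoMetricSpace Y] (η : ℝ)
    (f : X → Y) : Prop :=
  ∀ x y, |dist (f x) (f y) - dist x y| ≤ η * dist x y

namespace IsAlmostIsometry

variable {X Y Z : Type*} [PseudoMetricSpace X] [PseudoMetricSpace Y] [PseudoMetricSpace Z]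
  {η η₁ η₂ : ℝ} {f : X → Y} {g : Y → Z}

lemma mono (hf : IsAlmostIsometry η₁ f) (h : η₁ ≤ η₂) : IsAlmostIsometry η₂ f :=
  fun x y ↦ (hf x y).trans (by gcongr)

lemma mul_dist_le (hf : IsAlmostIsometry η f) (x y : X) :
    (1 - η) * dist x y ≤ dist (f x) (f y) := by
  linarith [(abs_le.1 (hf x y)).1]

lemma dist_le_mul (hf : IsAlmostIsometry η f) (x y : X) :
    dist (f x) (f y) ≤ (1 + η) * dist x y := by
  linarith [(abs_le.1 (hf x y)).2]

lemma comp (hη₂ : 0 ≤ η₂) (hg : IsAlmostIsometry η₂ g) (hf : IsAlmostIsometry η₁ f) :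
    IsAlmostIsometry (η₁ + η₂ + η₂ * η₁) (g ∘ f) := fun x y ↦
  calc |dist (g (f x)) (g (f y)) - dist x y|
      ≤ |dist (g (f x)) (g (f y)) - dist (f x) (f y)| + |dist (f x) (f y) - dist x y| :=
        abs_sub_le _ _ _
    _ ≤ η₂ * dist (f x) (f y) + η₁ * dist x y := add_le_add (hg _ _) (hf _ _)
    _ ≤ η₂ * ((1 + η₁) * dist x y) + η₁ * dist x y := by gcongr; exact hf.dist_le_mul x y
    _ = (η₁ + η₂ + η₂ * η₁) * dist x y := by ring

end IsAlmostIsometry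

lemma abs_sub_le_mul_of_abs_sq_sub_sq_le {N v K : ℝ} (hN : 0 ≤ N) (hv : 0 ≤ v)
    (h : |N ^ 2 - v ^ 2| ≤ K * v ^ 2) : |N - v| ≤ K * v := by
  rcases hv.eq_or_lt with rfl | hv
  · simpa using h
  · refine le_of_mul_le_mul_right ?_ hv
    calc |N - v| * v ≤ |N - v| * (N + v) := by gcongr; linarith
      _ = |N ^ 2 - v ^ 2| := by
        rw [sq_sub_sq, abs_mul, abs_of_nonneg (add_nonneg hN hv.le), mul_comm]
      _ ≤ K * v * v := by linarith

lemma one_add_sq_div_two_le_cosh (x : ℝ) : 1 + x ^ 2 / 2 ≤ Real.cosh x := by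
  have hsinh : (x / 2) ^ 2 ≤ Real.sinh (x / 2) ^ 2 := by
    rw [sq_le_sq, Real.abs_sinh, Real.self_le_sinh_iff]
    exact abs_nonneg _
  have hcosh : Real.cosh x = 1 + 2 * Real.sinh (x / 2) ^ 2 := by
    have h := Real.cosh_two_mul (x / 2)
    rw [mul_div_cancel₀ x two_ne_zero, Real.cosh_sq] at h
    linarith
  linarith

lemma mul_sq_log_sub_log_le_of_pos {s t : ℝ} (hs : 0 < s) (ht : 0 < t) :
    s * t * (Real.log s - Real.log t) ^ 2 ≤ (s - t) ^ 2 := by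
  have hcosh := one_add_sq_div_two_le_cosh (Real.log (s / t))
  rw [Real.cosh_log (div_pos hs ht), Real.log_div hs.ne' ht.ne'] at hcosh
  calc s * t * (Real.log s - Real.log t) ^ 2
      ≤ s * t * (s / t + (s / t)⁻¹ - 2) := by gcongr; linarith
    _ = (s - t) ^ 2 := by field_simp; ring

lemma abs_mul_sq_log_sub_log_le (s t : ℝ) :
    |s * t| * (Real.log s - Real.log t) ^ 2 ≤ (s - t) ^ 2 := by
  rcases eq_or_ne s 0 with rfl | hs
  · simp [sq_nonneg]
  rcases eq_or_ne t 0 with rfl | ht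
  · simp [sq_nonneg]
  calc |s * t| * (Real.log s - Real.log t) ^ 2
      = |s| * |t| * (Real.log |s| - Real.log |t|) ^ 2 := by
        rw [abs_mul, Real.log_abs, Real.log_abs]
    _ ≤ (|s| - |t|) ^ 2 := mul_sq_log_sub_log_le_of_pos (abs_pos.2 hs) (abs_pos.2 ht)
    _ ≤ (s - t) ^ 2 := sq_le_sq.2 (abs_abs_sub_abs_le s t)

section InnerProductSpace

variable {E : Type*} [SeminormedAddCommGroup E] [InnerProductSpace ℝ E]

lemma norm_smul_sub_smul_sq {u v : E} (hu : ‖u‖ = 1) (hv : ‖v‖ = 1) (s t : ℝ) :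
    ‖s • u - t • v‖ ^ 2 = (s - t) ^ 2 + s * t * ‖u - v‖ ^ 2 := by
  rw [norm_sub_sq_real, norm_sub_sq_real, norm_smul, norm_smul, real_inner_smul_left,
    real_inner_smul_right, hu, hv, mul_one, mul_one, Real.norm_eq_abs, Real.norm_eq_abs, sq_abs,
    sq_abs]
  ring

theorem isAlmostIsometry_smul_of_lipschitz_log {u : ℝ → E} {k : ℝ} (hu : ∀ t, ‖u t‖ = 1)
    (hlip : ∀ s t, ‖u s - u t‖ ≤ k * |Real.log s - Real.log t|) :
    IsAlmostIsometry (k ^ 2) fun t ↦ t • u t := by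
  intro s t
  rw [dist_eq_norm, Real.dist_eq]
  refine abs_sub_le_mul_of_abs_sq_sub_sq_le (norm_nonneg _) (abs_nonneg _) ?_
  rw [norm_smul_sub_smul_sq (hu s) (hu t), sq_abs, add_sub_cancel_left]
  calc |s * t * ‖u s - u t‖ ^ 2|
      = |s * t| * ‖u s - u t‖ ^ 2 := by rw [abs_mul, abs_sq]
    _ ≤ |s * t| * (k * |Real.log s - Real.log t|) ^ 2 := by gcongr; exact hlip s t
    _ = k ^ 2 * (|s * t| * (Real.log s - Real.log t) ^ 2) := by rw [mul_pow, sq_abs]; ring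
    _ ≤ k ^ 2 * (s - t) ^ 2 := by gcongr; exact abs_mul_sq_log_sub_log_le s t

end InnerProductSpace

lemma pt_add (a b c d : ℝ) : pt a b + pt c d = pt (a + c) (b + d) := by
  ext i; fin_cases i <;> simp [pt]

lemma pt_sub (a b c d : ℝ) : pt a b - pt c d = pt (a - c) (b - d) := by
  ext i; fin_cases i <;> simp [pt]

lemma smul_pt (r a b : ℝ) : r • pt a b = pt (r * a) (r * b) := by
  ext i; fin_cases i <;> simp [pt]

lemma norm_pt_sq (a b : ℝ) : ‖pt a b‖ ^ 2 = a ^ 2 + b ^ 2 := by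
  simp [EuclideanSpace.norm_sq_eq, pt, Fin.sum_univ_two]

lemma norm_pt_cos_sin (φ : ℝ) : ‖pt (Real.cos φ) (Real.sin φ)‖ = 1 := by
  rw [← pow_eq_one_iff_of_nonneg (norm_nonneg _) two_ne_zero, norm_pt_sq, Real.cos_sq_add_sin_sq]

lemma norm_pt_cos_sin_sub_le (φ ψ : ℝ) :
    ‖pt (Real.cos φ) (Real.sin φ) - pt (Real.cos ψ) (Real.sin ψ)‖ ≤ |φ - ψ| := by
  refine le_of_sq_le_sq ?_ (abs_nonneg _)
  calc ‖pt (Real.cos φ) (Real.sin φ) - pt (Real.cos ψ) (Real.sin ψ)‖ ^ 2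
      = 2 - 2 * Real.cos (φ - ψ) := by
        rw [pt_sub, norm_pt_sq, Real.cos_sub]
        linear_combination Real.cos_sq_add_sin_sq φ + Real.cos_sq_add_sin_sq ψ
    _ ≤ |φ - ψ| ^ 2 := by
        rw [sq_abs]
        linarith [Real.one_sub_sq_div_two_le_cos (x := φ - ψ)]

/-- The angle of the spiral at signed radius `r`, for `0 < a < b`: it equals `π` for
`0 < |r| ≤ a`, vanishes for `b ≤ |r|`, and is affine in `log |r|` in between. Since `Real.log` is
even, `r` and `-r` get the same angle; the junk value at `r = 0` is harmless, as the spiral passes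
through the origin there. -/
noncomputable def spiralAngle (a b r : ℝ) : ℝ :=
  Real.pi *
    (1 - Set.projIcc 0 1 zero_le_one ((Real.log r - Real.log a) / (Real.log b - Real.log a)))

/-- The planar spiral which makes a half turn between the radii `a` and `b` and is a straight line
elsewhere. -/
noncomputable def spiral (a b t : ℝ) : EuclideanSpace ℝ (Fin 2) :=
  t • pt (Real.cos (spiralAngle a b t)) (Real.sin (spiralAngle a b t))

lemma abs_spiralAngle_sub_le (a b s t : ℝ) :
    |spiralAngle a b s - spiralAngle a b t| ≤
      Real.pi / |Real.log b - Real.log a| * |Real.log s - Real.log t| := by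
  set B := Real.log b - Real.log a
  set x := (Real.log s - Real.log a) / B
  set y := (Real.log t - Real.log a) / B
  let P (w : ℝ) : ℝ := Set.projIcc 0 1 zero_le_one w
  have hxy : x - y = (Real.log s - Real.log t) / B := by
    rw [← sub_div, sub_sub_sub_cancel_right]
  calc |spiralAngle a b s - spiralAngle a b t|
      = Real.pi * |P x - P y| := by
        rw [spiralAngle, spiralAngle, ← mul_sub, sub_sub_sub_cancel_left, abs_mul,
          abs_of_pos Real.pi_pos, abs_sub_comm]
    _ ≤ Real.pi * |x - y| :=
        mul_le_mul_of_nonneg_left (Set.abs_projIcc_sub_projIcc zero_le_one) Real.pi_nonneg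
    _ = Real.pi / |B| * |Real.log s - Real.log t| := by rw [hxy, abs_div]; ring

theorem isAlmostIsometry_spiral (a b : ℝ) :
    IsAlmostIsometry ((Real.pi / (Real.log b - Real.log a)) ^ 2) (spiral a b) := by
  rw [← sq_abs, abs_div, abs_of_pos Real.pi_pos]
  exact isAlmostIsometry_smul_of_lipschitz_log (fun _ ↦ norm_pt_cos_sin _)
    fun s t ↦ (norm_pt_cos_sin_sub_le _ _).trans (abs_spiralAngle_sub_le a b s t)

lemma spiral_neg (a b t : ℝ) : spiral a b (-t) = -spiral a b t := by
  simp only [spiral, spiralAngle, Real.log_neg_eq_log, neg_smul]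

lemma spiral_inner (a b : ℝ) : spiral a b a = pt (-a) 0 := by
  simp [spiral, spiralAngle, smul_pt]

lemma spiral_outer {a b : ℝ} (ha : 0 < a) (hab : a < b) : spiral a b b = pt b 0 := by
  have hlog : Real.log b - Real.log a ≠ 0 := (sub_pos.2 (Real.log_lt_log ha hab)).ne'
  simp [spiral, spiralAngle, smul_pt, div_self hlog]

/-- The piecewise linear map of the line which is linear on `[-a, a]` and moves the points outside
this interval away from the origin by `c`. -/
noncomputable def stretch (c a t : ℝ) : ℝ :=
  t + c * Set.projIcc (-1) 1 (neg_le_self zero_le_one) (t / a)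

lemma stretch_of_le {a c t : ℝ} (ha : 0 < a) (h : a ≤ t) : stretch c a t = t + c := by
  rw [stretch, Set.projIcc_of_right_le _ ((one_le_div ha).2 h), mul_one]

lemma stretch_neg_of_le {a c t : ℝ} (ha : 0 < a) (h : a ≤ t) :
    stretch c a (-t) = -(t + c) := by
  have hle : -t / a ≤ -1 := by rw [neg_div]; exact neg_le_neg ((one_le_div ha).2 h)
  rw [stretch, Set.projIcc_of_le_left _ hle]
  ring

theorem isAlmostIsometry_stretch (c a : ℝ) : IsAlmostIsometry (|c| / |a|) (stretch c a) := by
  intro s t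
  let P (x : ℝ) : ℝ := Set.projIcc (-1) 1 (neg_le_self zero_le_one) x
  calc |dist (stretch c a s) (stretch c a t) - dist s t|
      ≤ |stretch c a s - stretch c a t - (s - t)| := abs_abs_sub_abs_le _ _
    _ = |c| * |P (s / a) - P (t / a)| := by rw [← abs_mul]; congr 1; simp only [stretch, P]; ring
    _ ≤ |c| * |s / a - t / a| :=
        mul_le_mul_of_nonneg_left (Set.abs_projIcc_sub_projIcc (neg_le_self zero_le_one))
          (abs_nonneg c)
    _ = |c| / |a| * dist s t := by rw [← sub_div, abs_div, Real.dist_eq]; ring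

/-- The spiral through the portals: the line is recentred at `m`, stretched so that the radii `a`
and `b` become `a + c` and `b + c`, and then wrapped around the point `(m', 0)` by the spiral. -/
noncomputable def portalSpiral (m m' a b c t : ℝ) : EuclideanSpace ℝ (Fin 2) :=
  pt m' 0 + spiral (a + c) (b + c) (stretch c a (t - m))

section PortalSpiral

variable {m m' a b c : ℝ}

lemma portalSpiral_add_inner (ha : 0 < a) :
    portalSpiral m m' a b c (m + a) = pt (m' - (a + c)) 0 := by
  rw [portalSpiral, add_sub_cancel_left, stretch_of_le ha le_rfl, spiral_inner, pt_add, add_zero,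
    sub_eq_add_neg]

lemma portalSpiral_sub_inner (ha : 0 < a) :
    portalSpiral m m' a b c (m - a) = pt (m' + (a + c)) 0 := by
  rw [portalSpiral, sub_sub_cancel_left, stretch_neg_of_le ha le_rfl, spiral_neg, spiral_inner,
    ← sub_eq_add_neg, pt_sub, sub_neg_eq_add, sub_zero]

lemma portalSpiral_add_outer (ha : 0 < a) (hab : a < b) (hac : 0 < a + c) :
    portalSpiral m m' a b c (m + b) = pt (m' + (b + c)) 0 := by
  rw [portalSpiral, add_sub_cancel_left, stretch_of_le ha hab.le,
    spiral_outer hac (by gcongr), pt_add, add_zero]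

lemma portalSpiral_sub_outer (ha : 0 < a) (hab : a < b) (hac : 0 < a + c) :
    portalSpiral m m' a b c (m - b) = pt (m' - (b + c)) 0 := by
  rw [portalSpiral, sub_sub_cancel_left, stretch_neg_of_le ha hab.le, spiral_neg,
    spiral_outer hac (by gcongr), ← sub_eq_add_neg, pt_sub, sub_zero]

end PortalSpiral

theorem isAlmostIsometry_portalSpiral (m m' a b c : ℝ) :
    IsAlmostIsometry (|c| / |a| + (Real.pi / (Real.log (b + c) - Real.log (a + c))) ^ 2 +
      (Real.pi / (Real.log (b + c) - Real.log (a + c))) ^ 2 * (|c| / |a|))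
      (portalSpiral m m' a b c) := by
  intro s t
  have h := (isAlmostIsometry_spiral (a + c) (b + c)).comp (sq_nonneg _)
    (isAlmostIsometry_stretch c a) (s - m) (t - m)
  rw [dist_sub_right] at h
  rwa [portalSpiral, portalSpiral, dist_add_left]

theorem exists_isAlmostIsometry_through_portals {p q p' q' x y : ℝ} (hx : 0 < (q - p) / 2 + x)
    (hx' : 0 < (p' - q') / 2 + x) (hxy : x < y) :
    ∃ g : ℝ → EuclideanSpace ℝ (Fin 2),
      g (p - y) = pt (q' - y) 0 ∧ g (p - x) = pt (p' + x) 0 ∧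
      g (q + x) = pt (q' - x) 0 ∧ g (q + y) = pt (p' + y) 0 ∧
      IsAlmostIsometry (|(p' - q') / 2 - (q - p) / 2| / ((q - p) / 2 + x) +
        (Real.pi / (Real.log ((p' - q') / 2 + y) - Real.log ((p' - q') / 2 + x))) ^ 2 +
        (Real.pi / (Real.log ((p' - q') / 2 + y) - Real.log ((p' - q') / 2 + x))) ^ 2 *
          (|(p' - q') / 2 - (q - p) / 2| / ((q - p) / 2 + x))) g := by
  set a := (q - p) / 2 + x
  set b := (q - p) / 2 + y
  set c := (p' - q') / 2 - (q - p) / 2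
  set m := (p + q) / 2
  set m' := (p' + q') / 2
  have hac : (p' - q') / 2 + x = a + c := by ring
  have hbc : (p' - q') / 2 + y = b + c := by ring
  have hab : a < b := add_lt_add_right hxy _
  rw [hac] at hx'
  refine ⟨portalSpiral m m' a b c, ?_, ?_, ?_, ?_, ?_⟩
  · convert portalSpiral_sub_outer (m := m) (m' := m') hx hab hx' using 2 <;> ring
  · convert portalSpiral_sub_inner (m := m) (m' := m') hx using 2 <;> ring
  · convert portalSpiral_add_inner (m := m) (m' := m') hx using 2 <;> ring
  · convert portalSpiral_add_outer (m := m) (m' := m') hx hab hx' using 2 <;> ring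
  · rw [hac, hbc]
    simpa only [abs_of_pos hx] using isAlmostIsometry_portalSpiral m m' a b c

lemma div_rpow_lt_div_rpow {Δ ε r s : ℝ} (hΔ : 0 < Δ) (hε : 0 < ε) (hε1 : ε < 1) (hrs : r < s) :
    Δ / ε ^ r < Δ / ε ^ s :=
  div_lt_div_of_pos_left hΔ (by positivity) (Real.rpow_lt_rpow_of_exponent_gt hε hε1 hrs)

lemma log_le_two_mul_log_sub_log {z h Δ : ℝ} (hz : 1 ≤ z) (hh : 0 ≤ h) (hhΔ : h ≤ Δ)
    (hΔ : 0 < Δ) :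
    Real.log z ≤ 2 * (Real.log (h + Δ * z ^ 2) - Real.log (h + Δ * z)) := by
  have hz0 : 0 < z := one_pos.trans_le hz
  have hle : z * (h + Δ * z) ^ 2 ≤ (h + Δ * z ^ 2) ^ 2 := by
    have hsq : h ^ 2 ≤ Δ ^ 2 * z ^ 3 :=
      calc h ^ 2 ≤ Δ ^ 2 := by gcongr
        _ ≤ Δ ^ 2 * z ^ 3 := le_mul_of_one_le_right (sq_nonneg Δ) (one_le_pow₀ hz)
    linarith [mul_nonneg (sub_nonneg.2 hz) (sub_nonneg.2 hsq)]
  have hlog := Real.log_le_log (by positivity) hle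
  rw [Real.log_mul hz0.ne' (by positivity), Real.log_pow, Real.log_pow] at hlog
  push_cast at hlog
  linarith

lemma log_inv_div_six_le_log_sub_log {ε h Δ : ℝ} (hε : 0 < ε) (hε1 : ε ≤ 1) (hh : 0 ≤ h)
    (hhΔ : h ≤ Δ) (hΔ : 0 < Δ) :
    Real.log (1 / ε) / 6 ≤
      Real.log (h + Δ / ε ^ ((2 : ℝ) / 3)) - Real.log (h + Δ / ε ^ ((1 : ℝ) / 3)) := by
  set z := (ε ^ ((1 : ℝ) / 3))⁻¹ with hz
  have hz1 : 1 ≤ z :=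
    (one_le_inv₀ (by positivity)).2 (Real.rpow_le_one hε.le hε1 (by norm_num))
  have hz2 : (ε ^ ((2 : ℝ) / 3))⁻¹ = z ^ 2 := by
    rw [hz, inv_pow, ← Real.rpow_mul_natCast hε.le]
    norm_num
  have hlogz : Real.log z = Real.log (1 / ε) / 3 := by
    rw [hz, Real.log_inv, Real.log_rpow hε, one_div ε, Real.log_inv]
    ring
  rw [div_eq_mul_inv Δ, div_eq_mul_inv Δ, hz2]
  linarith [log_le_two_mul_log_sub_log hz1 hh hhΔ hΔ]

lemma le_four_div_sq_log_inv {ε : ℝ} (hε : 0 < ε) (hε1 : ε < 1) :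
    ε ≤ 4 / Real.log (1 / ε) ^ 2 := by
  have hL : 0 < Real.log (1 / ε) := Real.log_pos ((one_lt_div hε).2 hε1)
  have hlt := Real.abs_log_mul_self_rpow_lt ε (1 / 2) hε hε1.le (by norm_num)
  rw [← Real.sqrt_eq_rpow] at hlt
  rw [le_div_iff₀ (by positivity)]
  calc ε * Real.log (1 / ε) ^ 2 = |Real.log ε * √ε| ^ 2 := by
        rw [one_div, Real.log_inv, neg_sq, sq_abs, mul_pow, Real.sq_sqrt hε.le, mul_comm]
    _ ≤ (1 / (1 / 2)) ^ 2 := by gcongr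
    _ = 4 := by norm_num

lemma distortion_le_div_sq_log_inv {ε B η : ℝ} (hε : 0 < ε) (hε1 : ε < 1)
    (hB : Real.log (1 / ε) / 6 ≤ B) (hη : η ≤ ε) :
    η + (Real.pi / B) ^ 2 + (Real.pi / B) ^ 2 * η ≤ 724 / Real.log (1 / ε) ^ 2 := by
  set L := Real.log (1 / ε)
  have hL : 0 < L := Real.log_pos ((one_lt_div hε).2 hε1)
  have hBpos : 0 < B := (div_pos hL (by norm_num)).trans_le hB
  have hκ : (Real.pi / B) ^ 2 ≤ 360 / L ^ 2 :=
    calc (Real.pi / B) ^ 2 ≤ (Real.pi / (L / 6)) ^ 2 := by gcongr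
      _ = 36 * Real.pi ^ 2 / L ^ 2 := by field_simp; norm_num
      _ ≤ 360 / L ^ 2 := by
        gcongr
        nlinarith [Real.pi_pos, Real.pi_lt_d2]
  have hκη : (Real.pi / B) ^ 2 * η ≤ (Real.pi / B) ^ 2 :=
    mul_le_of_le_one_right (sq_nonneg _) (hη.trans hε1.le)
  calc η + (Real.pi / B) ^ 2 + (Real.pi / B) ^ 2 * η
      ≤ 4 / L ^ 2 + 360 / L ^ 2 + 360 / L ^ 2 := by
        linarith [le_four_div_sq_log_inv hε hε1]
    _ = 724 / L ^ 2 := by ring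

/-- **The rescaled spiral through the portals.** There are `C > 0` and `ε₀ ∈ (0,1)` such that
for every `ε ∈ (0, ε₀)` and all `p, q, p', q' ∈ ℝ` with `Δ := q - p > 0` and
`|(p' - q') - Δ| ≤ εΔ`, defining the portals
`α = p - Δ/ε^{2/3}`, `β = p - Δ/ε^{1/3}`, `γ = q + Δ/ε^{1/3}`, `δ = q + Δ/ε^{2/3}`,
`α' = q' - Δ/ε^{2/3}`, `β' = q' - Δ/ε^{1/3}`, `γ' = p' + Δ/ε^{1/3}`, `δ' = p' + Δ/ε^{2/3}`,
there is a map `g : ℝ → ℝ²` with `g α = (α', 0)`, `g β = (γ', 0)`, `g γ = (β', 0)`,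
`g δ = (δ', 0)`, and `(1 - C/log²(1/ε))|t₁-t₂| ≤ ‖g t₁ - g t₂‖ ≤ (1 + C/log²(1/ε))|t₁-t₂|`
for all `t₁, t₂ ∈ ℝ`. -/
theorem spiral_with_portals :
    ∃ C > (0 : ℝ), ∃ ε₀ : ℝ, 0 < ε₀ ∧ ε₀ < 1 ∧ ∀ ε : ℝ, 0 < ε → ε < ε₀ →
      ∀ p q p' q' : ℝ, ∀ Δ : ℝ, Δ = q - p → 0 < Δ → |(p' - q') - Δ| ≤ ε * Δ →
        ∀ α β γ δ α' β' γ' δ' : ℝ,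
          α = p - Δ / ε ^ ((2 : ℝ) / 3) → β = p - Δ / ε ^ ((1 : ℝ) / 3) →
          γ = q + Δ / ε ^ ((1 : ℝ) / 3) → δ = q + Δ / ε ^ ((2 : ℝ) / 3) →
          α' = q' - Δ / ε ^ ((2 : ℝ) / 3) → β' = q' - Δ / ε ^ ((1 : ℝ) / 3) →
          γ' = p' + Δ / ε ^ ((1 : ℝ) / 3) → δ' = p' + Δ / ε ^ ((2 : ℝ) / 3) →
          ∃ g : ℝ → EuclideanSpace ℝ (Fin 2),
            g α = pt α' 0 ∧ g β = pt γ' 0 ∧ g γ = pt β' 0 ∧ g δ = pt δ' 0 ∧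
            ∀ t₁ t₂ : ℝ,
              (1 - C / (Real.log (1 / ε)) ^ 2) * |t₁ - t₂| ≤ ‖g t₁ - g t₂‖ ∧
              ‖g t₁ - g t₂‖ ≤ (1 + C / (Real.log (1 / ε)) ^ 2) * |t₁ - t₂| := by
  refine ⟨724, by norm_num, 1 / 2, by norm_num, by norm_num, ?_⟩
  rintro ε hε hε2 p q p' q' Δ hΔpq hΔ hgap _ _ _ _ _ _ _ _ rfl rfl rfl rfl rfl rfl rfl rfl
  have hε1 : ε < 1 := by linarith
  have hεΔ : ε * Δ < Δ := mul_lt_of_lt_one_left hΔ hε1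
  obtain ⟨hgap_lower, hgap_upper⟩ := abs_le.1 hgap
  have hx : Δ < Δ / ε ^ ((1 : ℝ) / 3) := by
    simpa using div_rpow_lt_div_rpow hΔ hε hε1 (r := 0) (by norm_num)
  have hxy : Δ / ε ^ ((1 : ℝ) / 3) < Δ / ε ^ ((2 : ℝ) / 3) :=
    div_rpow_lt_div_rpow hΔ hε hε1 (by norm_num)
  obtain ⟨g, hα, hβ, hγ, hδ, hg⟩ := exists_isAlmostIsometry_through_portals
    (p := p) (q := q) (p' := p') (q' := q') (by linarith) (by linarith) hxy
  have hstretch : |(p' - q') / 2 - (q - p) / 2| / ((q - p) / 2 + Δ / ε ^ ((1 : ℝ) / 3)) ≤ ε := by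
    rw [div_le_iff₀ (by linarith), ← sub_div, ← hΔpq, abs_div, abs_two]
    linarith [mul_pos hε (hΔ.trans hx)]
  have hturn := log_inv_div_six_le_log_sub_log (h := (p' - q') / 2) hε hε1.le
    (by linarith) (by linarith) hΔ
  have hgC := hg.mono (distortion_le_div_sq_log_inv hε hε1 hturn hstretch)
  refine ⟨g, hα, hβ, hγ, hδ, fun t₁ t₂ ↦ ?_⟩
  rw [← dist_eq_norm, ← Real.dist_eq]
  exact ⟨hgC.mul_dist_le t₁ t₂, hgC.dist_le_mul t₁ t₂⟩
end

section
/- Let k ≥ 1 be an integer and ε = 2^{−k}. Let m ≥ 2, let e₁ ∈ ℝ^m be the first standard basis vector, and let f' : [−ε, 1] → ℝ^m be any injective map with f'(−ε) = ε·e₁, f'(0) = 0, and f'(1) = e₁. Then the distortion of f' is at least min(1/cos(π/(k + 2)), √2). -/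
/-!
Let `α = arccos D⁻¹`, where `D ≤ √2` is the distortion of `f`. The law of cosines gives two
estimates for angles at `f 0`. As `x / 2` is the midpoint of `0` and `x`, the points `f x` and
`f (x / 2)` are seen from `f 0` under an angle at most `α`; as `0` is the midpoint of `-y` and `y`,
the points `f (-y)` and `f y` are seen under an angle at least `π - 2 * α`. Halving `x` repeatedly
down to `y = x / 2 ^ k`, the triangle inequality for angles yields
`π - 2 * α ≤ ∠ (f (-y)) (f 0) (f x) + k * α`. In the three-point example the angle on the right is
zero, so `π / (k + 2) ≤ α`, that is, `D⁻¹ ≤ cos (π / (k + 2))`.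
-/

/-- `g` restricted to `A ⊆ ℝ` (mapping into `ℝᵐ`) has distortion at most `D`. -/
def HasDistortionAtMost {m : ℕ} (A : Set ℝ) (g : ℝ → EuclideanSpace ℝ (Fin m)) (D : ℝ) : Prop :=
  ∃ lam > (0 : ℝ), ∀ x ∈ A, ∀ y ∈ A,
    lam * |x - y| ≤ ‖g x - g y‖ ∧ ‖g x - g y‖ ≤ lam * D * |x - y|

open Real EuclideanGeometry

lemma cos_pi_sub_two_mul_arccos {x : ℝ} (hx₀ : -1 ≤ x) (hx₁ : x ≤ 1) :
    cos (π - 2 * arccos x) = 1 - 2 * x ^ 2 := by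
  rw [cos_pi_sub, cos_two_mul, cos_arccos hx₀ hx₁]
  ring

lemma cos_pi_div_pos {x : ℝ} (hx : 2 < x) : 0 < cos (π / x) :=
  cos_pos_of_mem_Ioo ⟨by linarith [pi_pos, div_pos pi_pos (two_pos.trans hx)],
    div_lt_div_of_pos_left pi_pos two_pos hx⟩

section EuclideanAngles

variable {V P : Type*} [NormedAddCommGroup V] [InnerProductSpace ℝ V] [MetricSpace P]
  [NormedAddTorsor V P]

lemma angle_le_range_sum_angle {o : P} {p : ℕ → P} (hp : p 0 ≠ o) (n : ℕ) :
    ∠ (p 0) o (p n) ≤ ∑ i ∈ Finset.range n, ∠ (p i) o (p (i + 1)) := by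
  induction n with
  | zero => simp [angle_self_of_ne hp]
  | succ n ih =>
    rw [Finset.sum_range_succ]
    exact (angle_le_angle_add_angle o (p 0) (p n) (p (n + 1))).trans (by gcongr)

lemma angle_le_arccos_inv_of_two_mul_le_dist {o p q : P} {r D : ℝ} (hr : 0 < r) (hD : D ^ 2 ≤ 2)
    (hp : 2 * r ≤ dist p o) (hq : dist q o ≤ r * D) (hpq : dist p q ≤ r * D) :
    ∠ p o q ≤ arccos D⁻¹ := by
  have h_tri : dist p o ≤ dist p q + dist q o := dist_triangle p q o
  have hD_pos : 0 < D := by nlinarith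
  have hq_pos : 0 < dist q o := by nlinarith
  have h_law := law_cos p o q
  set a := dist p o
  -- Substituting `dist q o = D * t` turns the claim into a polynomial inequality in which
  -- `a` occurs only through `(a - t) ^ 2`, so that the extremal case is `a = 2 * r`.
  obtain ⟨t, ht⟩ : ∃ t, dist q o = D * t := ⟨dist q o / D, by field_simp⟩
  rw [ht] at h_law hq hq_pos
  have ht_pos : 0 < t := pos_of_mul_pos_right hq_pos hD_pos.le
  have htr : t ≤ r := by nlinarith
  have h_sq_pq : dist p q ^ 2 ≤ (r * D) ^ 2 := by gcongr
  have h_sq_a : (2 * r - t) ^ 2 ≤ (a - t) ^ 2 := by gcongr; linarith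
  have h_factor : 0 ≤ (r - t) * (4 * r - D ^ 2 * (r + t)) :=
    mul_nonneg (by linarith) (by nlinarith)
  have h_cos : 2 * a * t ≤ 2 * a * t * (D * cos (∠ p o q)) := calc
    2 * a * t ≤ a ^ 2 + (D * t) ^ 2 - dist p q ^ 2 := by linarith
    _ = 2 * a * t * (D * cos (∠ p o q)) := by linarith
  have h_le : D⁻¹ ≤ cos (∠ p o q) := by
    rw [inv_le_iff_one_le_mul₀' hD_pos]
    exact (le_mul_iff_one_le_right (mul_pos (by linarith) ht_pos)).1 h_cos
  rw [← arccos_cos (angle_nonneg p o q) (angle_le_pi p o q)]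
  exact arccos_le_arccos h_le

lemma cos_angle_le_of_two_mul_le_dist {o p q : P} {r D : ℝ} (hr : 0 < r) (hD : D < 2)
    (hp : dist p o ≤ r * D) (hq : dist q o ≤ r * D) (hpq : 2 * r ≤ dist p q) :
    cos (∠ p o q) ≤ 1 - 2 * D⁻¹ ^ 2 := by
  have h_tri : dist p q ≤ dist p o + dist q o := dist_triangle_right p q o
  have hD_pos : 0 < D := by nlinarith
  have hp_pos : 0 < dist p o := by nlinarith
  have hq_pos : 0 < dist q o := by nlinarith
  have h_law := law_cos p o q
  obtain ⟨s, hs⟩ : ∃ s, dist p o = D * s := ⟨dist p o / D, by field_simp⟩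
  obtain ⟨t, ht⟩ : ∃ t, dist q o = D * t := ⟨dist q o / D, by field_simp⟩
  rw [hs] at h_law hp hp_pos
  rw [ht] at h_law hq hq_pos
  have hs_pos : 0 < s := pos_of_mul_pos_right hp_pos hD_pos.le
  have ht_pos : 0 < t := pos_of_mul_pos_right hq_pos hD_pos.le
  have hsr : s ≤ r := by nlinarith
  have htr : t ≤ r := by nlinarith
  have h_sq_pq : (2 * r) ^ 2 ≤ dist p q ^ 2 := by gcongr
  have h_st : s ^ 2 - s * t + t ^ 2 ≤ r ^ 2 := by
    rcases le_total s t with hst | hts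
    · nlinarith [mul_nonneg hs_pos.le (sub_nonneg.2 hst)]
    · nlinarith [mul_nonneg ht_pos.le (sub_nonneg.2 hts)]
  have h_sq_sub : D ^ 2 * (s - t) ^ 2 ≤ 4 * (s - t) ^ 2 := by gcongr; nlinarith
  have h_cos : 2 * s * t * (D ^ 2 * cos (∠ p o q)) ≤ 2 * s * t * (D ^ 2 - 2) := calc
    2 * s * t * (D ^ 2 * cos (∠ p o q)) = (D * s) ^ 2 + (D * t) ^ 2 - dist p q ^ 2 := by linarith
    _ ≤ 2 * s * t * (D ^ 2 - 2) := by linarith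
  calc cos (∠ p o q) ≤ (D ^ 2 - 2) / D ^ 2 :=
        (le_div_iff₀' (by positivity)).2 (le_of_mul_le_mul_left h_cos (by positivity))
    _ = 1 - 2 * D⁻¹ ^ 2 := by field_simp

lemma pi_sub_two_mul_arccos_inv_le_angle_of_two_mul_le_dist {o p q : P} {r D : ℝ} (hr : 0 < r)
    (hD : D < 2) (hp : dist p o ≤ r * D) (hq : dist q o ≤ r * D) (hpq : 2 * r ≤ dist p q) :
    π - 2 * arccos D⁻¹ ≤ ∠ p o q := by
  have h_tri : dist p q ≤ dist p o + dist q o := dist_triangle_right p q o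
  have hD_one : 1 ≤ D := by nlinarith
  have h_le := cos_angle_le_of_two_mul_le_dist hr hD hp hq hpq
  have hD_inv_pos : 0 < D⁻¹ := inv_pos.2 (by linarith)
  rw [← cos_pi_sub_two_mul_arccos (by linarith) (inv_le_one_of_one_le₀ hD_one)] at h_le
  have h_arccos : arccos D⁻¹ ≤ π / 2 := arccos_le_pi_div_two.2 hD_inv_pos.le
  exact (strictAntiOn_cos.le_iff_ge ⟨angle_nonneg _ _ _, angle_le_pi _ _ _⟩
    ⟨by linarith, by linarith [arccos_nonneg D⁻¹]⟩).1 h_le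

end EuclideanAngles

/-- `DistortionLEOn f s D` says that the restriction of `f` to `s` has distortion at most `D`. It
extends `HasDistortionAtMost` to maps between arbitrary metric spaces; since `c` is free, `D` is
insensitive to rescaling either space. -/
def DistortionLEOn {X Y : Type*} [PseudoMetricSpace X] [PseudoMetricSpace Y] (f : X → Y)
    (s : Set X) (D : ℝ) : Prop :=
  ∃ c > (0 : ℝ), ∀ x ∈ s, ∀ y ∈ s,
    c * dist x y ≤ dist (f x) (f y) ∧ dist (f x) (f y) ≤ c * D * dist x y

lemma HasDistortionAtMost.distortionLEOn {m : ℕ} {s : Set ℝ} {f : ℝ → EuclideanSpace ℝ (Fin m)}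
    {D : ℝ} (h : HasDistortionAtMost s f D) : DistortionLEOn f s D := by
  simpa only [HasDistortionAtMost, DistortionLEOn, dist_eq_norm, Real.norm_eq_abs] using h

namespace DistortionLEOn

lemma one_le {X Y : Type*} [PseudoMetricSpace X] [PseudoMetricSpace Y] {f : X → Y} {s : Set X}
    {D : ℝ} (h : DistortionLEOn f s D) {x y : X} (hx : x ∈ s) (hy : y ∈ s) (hxy : 0 < dist x y) :
    1 ≤ D := by
  obtain ⟨c, hc, hf⟩ := h
  have h_le : c * dist x y ≤ c * dist x y * D := by
    linarith [(hf x hx y hy).1.trans (hf x hx y hy).2]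
  exact (le_mul_iff_one_le_right (by positivity)).1 h_le

lemma injOn {X Y : Type*} [MetricSpace X] [PseudoMetricSpace Y] {f : X → Y} {s : Set X} {D : ℝ}
    (h : DistortionLEOn f s D) : Set.InjOn f s := by
  obtain ⟨c, hc, hf⟩ := h
  intro x hx y hy hxy
  have h_le : c * dist x y ≤ 0 := by simpa [hxy] using (hf x hx y hy).1
  exact dist_le_zero.1 (nonpos_of_mul_nonpos_right h_le hc)

variable {E V P : Type*} [NormedAddCommGroup E] [NormedSpace ℝ E] [NormedAddCommGroup V]
  [InnerProductSpace ℝ V] [MetricSpace P] [NormedAddTorsor V P] {f : E → P} {s : Set E} {D : ℝ}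
  {x : E} {k : ℕ}

lemma angle_two_smul_le_arccos_inv (h : DistortionLEOn f s D) (hD : D ^ 2 ≤ 2) (hx₀ : x ≠ 0)
    (h0 : 0 ∈ s) (hx : x ∈ s) (h2x : (2 : ℝ) • x ∈ s) :
    ∠ (f ((2 : ℝ) • x)) (f 0) (f x) ≤ arccos D⁻¹ := by
  obtain ⟨c, hc, hf⟩ := h
  have h_dist : dist ((2 : ℝ) • x) x = ‖x‖ := by rw [dist_eq_norm, two_smul, add_sub_cancel_right]
  have h_far := (hf _ h2x 0 h0).1
  have h_near := (hf x hx 0 h0).2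
  have h_pair := (hf _ h2x x hx).2
  rw [dist_zero_right, norm_smul, Real.norm_two] at h_far
  rw [dist_zero_right] at h_near
  rw [h_dist] at h_pair
  have hr : 0 < c * ‖x‖ := mul_pos hc (norm_pos_iff.2 hx₀)
  exact angle_le_arccos_inv_of_two_mul_le_dist hr hD (by linarith) (by linarith) (by linarith)

lemma pi_sub_two_mul_arccos_inv_le_angle_neg (h : DistortionLEOn f s D) (hD : D < 2)
    (hx₀ : x ≠ 0) (h0 : 0 ∈ s) (hx : x ∈ s) (hnx : -x ∈ s) :
    π - 2 * arccos D⁻¹ ≤ ∠ (f (-x)) (f 0) (f x) := by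
  obtain ⟨c, hc, hf⟩ := h
  have h_dist : dist (-x) x = 2 * ‖x‖ := by
    rw [dist_eq_norm, ← neg_add', norm_neg, ← two_smul ℝ, norm_smul, Real.norm_two]
  have h_neg := (hf _ hnx 0 h0).2
  have h_pos := (hf x hx 0 h0).2
  have h_pair := (hf _ hnx x hx).1
  rw [dist_zero_right, norm_neg] at h_neg
  rw [dist_zero_right] at h_pos
  rw [h_dist] at h_pair
  have hr : 0 < c * ‖x‖ := mul_pos hc (norm_pos_iff.2 hx₀)
  exact pi_sub_two_mul_arccos_inv_le_angle_of_two_mul_le_dist hr hD (by linarith) (by linarith)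
    (by linarith)

lemma angle_inv_two_pow_smul_le (h : DistortionLEOn f s D) (hD : D ^ 2 ≤ 2) (hx₀ : x ≠ 0)
    (h0 : 0 ∈ s) (hs : ∀ i ≤ k, (2⁻¹ : ℝ) ^ i • x ∈ s) :
    ∠ (f x) (f 0) (f ((2⁻¹ : ℝ) ^ k • x)) ≤ k * arccos D⁻¹ := by
  have h_halve (i : ℕ) (hi : i < k) :
      ∠ (f ((2⁻¹ : ℝ) ^ i • x)) (f 0) (f ((2⁻¹ : ℝ) ^ (i + 1) • x)) ≤ arccos D⁻¹ := by
    have h_two : (2 : ℝ) • (2⁻¹ : ℝ) ^ (i + 1) • x = (2⁻¹ : ℝ) ^ i • x := by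
      rw [smul_smul, pow_succ', mul_inv_cancel_left₀ two_ne_zero]
    rw [← h_two]
    exact h.angle_two_smul_le_arccos_inv hD (by simpa using hx₀) h0 (hs _ hi)
      (h_two ▸ hs i hi.le)
  have hx : x ∈ s := by simpa using hs 0 k.zero_le
  have h_sum := angle_le_range_sum_angle (o := f 0) (p := fun i ↦ f ((2⁻¹ : ℝ) ^ i • x))
    (by simpa using h.injOn.ne hx h0 hx₀) k
  calc ∠ (f x) (f 0) (f ((2⁻¹ : ℝ) ^ k • x))
      ≤ ∑ i ∈ Finset.range k, ∠ (f ((2⁻¹ : ℝ) ^ i • x)) (f 0) (f ((2⁻¹ : ℝ) ^ (i + 1) • x)) := by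
        simpa using h_sum
    _ ≤ k * arccos D⁻¹ := by
        simpa using Finset.sum_le_card_nsmul _ _ _ fun i hi ↦ h_halve i (Finset.mem_range.1 hi)

lemma pi_sub_angle_le (h : DistortionLEOn f s D) (hD : D ^ 2 ≤ 2) (hx₀ : x ≠ 0) (h0 : 0 ∈ s)
    (hs : ∀ i ≤ k, (2⁻¹ : ℝ) ^ i • x ∈ s) (hneg : -((2⁻¹ : ℝ) ^ k • x) ∈ s) :
    π - ∠ (f (-((2⁻¹ : ℝ) ^ k • x))) (f 0) (f x) ≤ (k + 2) * arccos D⁻¹ := by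
  have h_near := h.angle_inv_two_pow_smul_le hD hx₀ h0 hs
  have h_anti := h.pi_sub_two_mul_arccos_inv_le_angle_neg (by nlinarith) (by simpa using hx₀) h0
    (hs k le_rfl) hneg
  have h_tri := angle_le_angle_add_angle (f 0) (f (-((2⁻¹ : ℝ) ^ k • x))) (f x)
    (f ((2⁻¹ : ℝ) ^ k • x))
  linarith

end DistortionLEOn

theorem lower_bound_on_interval_extension_general {E V P : Type*} [NormedAddCommGroup E]
    [NormedSpace ℝ E] [NormedAddCommGroup V] [InnerProductSpace ℝ V] [MetricSpace P]
    [NormedAddTorsor V P] {f : E → P} {s : Set E} {D : ℝ} {x : E} {k : ℕ} (hx₀ : x ≠ 0)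
    (h0 : 0 ∈ s) (hs : ∀ i ≤ k, (2⁻¹ : ℝ) ^ i • x ∈ s) (hneg : -((2⁻¹ : ℝ) ^ k • x) ∈ s)
    (hcos : 0 < cos ((π - ∠ (f (-((2⁻¹ : ℝ) ^ k • x))) (f 0) (f x)) / (k + 2)))
    (h : DistortionLEOn f s D) :
    min (1 / cos ((π - ∠ (f (-((2⁻¹ : ℝ) ^ k • x))) (f 0) (f x)) / (k + 2))) √2 ≤ D := by
  have hx : x ∈ s := by simpa using hs 0 k.zero_le
  have hD_one : 1 ≤ D := h.one_le hx h0 (dist_pos.2 hx₀)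
  have hD_pos : 0 < D := by linarith
  rw [min_le_iff, or_iff_not_imp_right, not_le]
  intro hD
  have hD_sq : D ^ 2 ≤ 2 := ((lt_sqrt hD_pos.le).1 hD).le
  set φ := (π - ∠ (f (-((2⁻¹ : ℝ) ^ k • x))) (f 0) (f x)) / (k + 2)
  have hφ_nonneg : 0 ≤ φ := div_nonneg (sub_nonneg.2 (angle_le_pi _ _ _)) (by positivity)
  have hφ : φ ≤ arccos D⁻¹ :=
    (div_le_iff₀' (by positivity)).2 (h.pi_sub_angle_le hD_sq hx₀ h0 hs hneg)
  have h_inv : D⁻¹ ≤ cos φ := by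
    rw [← cos_arccos (by linarith [inv_pos.2 hD_pos]) (inv_le_one_of_one_le₀ hD_one)]
    exact cos_le_cos_of_nonneg_of_le_pi hφ_nonneg (arccos_le_pi _) hφ
  exact (one_div_le hcos hD_pos).2 (by rwa [one_div])

/-- **Lower bound on the distortion of extensions of the three-point example.** Let `k ≥ 1`,
`ε = 2⁻ᵏ`, `m ≥ 2`. Every injective map `f' : [-ε, 1] → ℝᵐ` with `f'(-ε) = ε e₁`,
`f' 0 = 0` and `f' 1 = e₁` has distortion at least `min (1/cos(π/(k+2))) √2`. -/
theorem lower_bound_on_interval_extension (k : ℕ) (hk : 1 ≤ k) (ε : ℝ) (hε : ε = 1 / 2 ^ k)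
    (m : ℕ) (hm : 2 ≤ m) (f' : ℝ → EuclideanSpace ℝ (Fin m))
    (hinj : Set.InjOn f' (Set.Icc (-ε) 1))
    (h₁ : ∀ j : Fin m, f' (-ε) j = if (j : ℕ) = 0 then ε else 0)
    (h₂ : ∀ j : Fin m, f' 0 j = 0)
    (h₃ : ∀ j : Fin m, f' 1 j = if (j : ℕ) = 0 then 1 else 0)
    (D : ℝ) (hD : HasDistortionAtMost (Set.Icc (-ε) 1) f' D) :
    min (1 / Real.cos (Real.pi / (k + 2))) (Real.sqrt 2) ≤ D := by
  have hε_smul : (2⁻¹ : ℝ) ^ k • (1 : ℝ) = ε := by simp [hε]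
  have hε_pos : 0 < ε := by rw [hε]; positivity
  have hε_le : ε ≤ 1 := hε ▸ div_le_self zero_le_one (one_le_pow₀ one_le_two)
  have h_zero_mem : (0 : ℝ) ∈ Set.Icc (-ε) 1 := ⟨by linarith, zero_le_one⟩
  have h_neg_mem : -ε ∈ Set.Icc (-ε) 1 := ⟨le_rfl, by linarith⟩
  have h_pow_mem (i : ℕ) : (2⁻¹ : ℝ) ^ i • (1 : ℝ) ∈ Set.Icc (-ε) 1 := by
    have h_pos : (0 : ℝ) < 2⁻¹ ^ i := by positivity
    rw [smul_eq_mul, mul_one]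
    exact ⟨by linarith, pow_le_one₀ (by norm_num) (by norm_num)⟩
  have h_add_two : (2 : ℝ) < k + 2 := by linarith [Nat.one_le_cast (α := ℝ).2 hk]
  have h_wbtw : Wbtw ℝ (f' 0) (f' (-ε)) (f' 1) :=
    ⟨ε, ⟨hε_pos.le, hε_le⟩, by ext j; simp [AffineMap.lineMap_apply, h₁, h₂, h₃]⟩
  have h_angle : ∠ (f' (-ε)) (f' 0) (f' 1) = 0 :=
    h_wbtw.angle₂₁₃_eq_zero_of_ne (hinj.ne h_neg_mem h_zero_mem (by linarith))
  have h_bound := lower_bound_on_interval_extension_general (k := k) one_ne_zero h_zero_mem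
    (fun i _ ↦ h_pow_mem i) (by rwa [hε_smul])
    (by simpa only [hε_smul, h_angle, sub_zero] using cos_pi_div_pos h_add_two) hD.distortionLEOn
  simpa only [hε_smul, h_angle, sub_zero] using h_bound
end
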